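/- Let S = {f ∈ C^∞(ℝ³) : f(x,y,z) = a·y + g(x,z) for some a ∈ ℝ and smooth g : ℝ² → ℝ}. Then S is a Lie subalgebra of (C^∞(ℝ³), {·,·}) for the Lagrange bracket, and the map Π : S → (vector fields on ℝ² with coordinates (x,z)) given by Π(a·y + g) = (−g_z, g_x + a·z) is a Lie algebra homomorphism whose kernel is the one-dimensional space of constant functions, and whose image is exactly the set of vector fields Y = (P,Q) on ℝ² such that ∂P/∂x + ∂Q/∂z is a constant function, i.e., those Y with L_Y(dx ∧ dz) = λ·dx ∧ dz for a constant λ ∈ ℝ. -/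

import Mathlib

noncomputable section

/-- `ℝ³` with coordinates `(x, y, z)`. -/
abbrev R3 : Type := ℝ × ℝ × ℝ

/-- `ℝ²`, here with coordinates `(x, z)`. -/
abbrev R2 : Type := ℝ × ℝ

/-- Partial derivative in `x` of a function on `ℝ³`. -/
noncomputable def px (f : R3 → ℝ) (p : R3) : ℝ := fderiv ℝ f p (1, 0, 0)

/-- Partial derivative in `y` of a function on `ℝ³`. -/
noncomputable def py (f : R3 → ℝ) (p : R3) : ℝ := fderiv ℝ f p (0, 1, 0)

/-- Partial derivative in `z` of a function on `ℝ³`. -/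
noncomputable def pz (f : R3 → ℝ) (p : R3) : ℝ := fderiv ℝ f p (0, 0, 1)

/-- The Lagrange bracket
`{f,g} = f_x g_z − f_z g_x + z (f_y g_z − f_z g_y) + f g_y − g f_y`. -/
noncomputable def lagr (f g : R3 → ℝ) (p : R3) : ℝ :=
  px f p * pz g p - pz f p * px g p
    + p.2.2 * (py f p * pz g p - pz f p * py g p)
    + f p * py g p - g p * py f p

/-- Membership in `S`: `f(x,y,z) = a·y + g(x,z)` with `a ∈ ℝ` and `g` smooth. -/
def memS (f : R3 → ℝ) : Prop :=
  ∃ a : ℝ, ∃ gf : R2 → ℝ, ContDiff ℝ (⊤ : ℕ∞) gf ∧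
    ∀ p : R3, f p = a * p.2.1 + gf (p.1, p.2.2)

/-- The projection `Π : S → 𝒟(ℝ²)`, `X_{ay+g} ↦ (−g_z) ∂/∂x + (g_x + a z) ∂/∂z`,
written in the coordinates `(x, z)` on the plane. -/
noncomputable def PiS (f : R3 → ℝ) : R2 → R2 := fun q =>
  (-(pz f (q.1, 0, q.2)), px f (q.1, 0, q.2) + py f (q.1, 0, q.2) * q.2)

/-- Lie bracket of vector fields on the `(x, z)`-plane. -/
noncomputable def pbr (Y Z : R2 → R2) : R2 → R2 := fun q =>
  fderiv ℝ Z q (Y q) - fderiv ℝ Y q (Z q)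

/-!
Let `ω = dx ∧ dz` on the `(x, z)`-plane. The map `Π` sends `a·y + g` to the vector field `Y` with
`ι_Y ω = -dg - a z dx`, whose divergence is `a` because mixed partials commute. Cartan's formula
`ι_[Y,Z] ω = -d(ω(Y, Z)) + (div Z) ι_Y ω - (div Y) ι_Z ω` therefore shows that the bracket of the
fields of `a·y + g` and `b·y + k` is the field of `ω(Y, Z) + b g - a k`, and this is exactly the
Lagrange bracket of the two functions. Conversely, if `div Y = a` is constant, then
`ι_Y ω + a z dx` is closed, so by the Poincaré lemma it is `-dg` for some `g`; the field vanishes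
only if its divergence `a` and the differential `dg` do.
-/

open scoped ContDiff

/-- The partial derivative in `x` of a function on the `(x, z)`-plane. -/
def partialX (g : R2 → ℝ) (q : R2) : ℝ := fderiv ℝ g q (1, 0)

/-- The partial derivative in `z` of a function on the `(x, z)`-plane. -/
def partialZ (g : R2 → ℝ) (q : R2) : ℝ := fderiv ℝ g q (0, 1)

/-- The divergence `λ` of a vector field `Y` on the `(x, z)`-plane, i.e. the function with
`L_Y (dx ∧ dz) = λ · dx ∧ dz`. -/
def divergence (Y : R2 → R2) (q : R2) : ℝ :=
  partialX (fun r => (Y r).1) q + partialZ (fun r => (Y r).2) q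

/-- The function `(dx ∧ dz)(Y, Z)` of two vector fields on the `(x, z)`-plane. -/
def areaPairing (Y Z : R2 → R2) (q : R2) : ℝ := (Y q).1 * (Z q).2 - (Y q).2 * (Z q).1

/-- The element `a·y + g(x, z)` of `S`. -/
def affineInY (a : ℝ) (g : R2 → ℝ) (p : R3) : ℝ := a * p.2.1 + g (p.1, p.2.2)

/-- The conformally Hamiltonian vector field `Y = (-g_z, g_x + a z)` on the `(x, z)`-plane. With
`ω = dx ∧ dz` it is characterized by `ι_Y ω = -dg - a z dx`. -/
def conformalField (a : ℝ) (g : R2 → ℝ) (q : R2) : R2 :=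
  (-partialZ g q, partialX g q + a * q.2)

/-- The function `g'` for which `a·y + g(x, z)` and `b·y + k(x, z)` have Lagrange bracket
`0·y + g'(x, z)`, written through the vector fields that `Π` assigns to the two functions. -/
def conformalBracket (a b : ℝ) (g k : R2 → ℝ) : R2 → ℝ :=
  areaPairing (conformalField a g) (conformalField b k) + b • g + -a • k

section PlaneCalculus

variable {g : R2 → ℝ}

theorem fderiv_apply_eq_partials (g : R2 → ℝ) (q v : R2) :
    fderiv ℝ g q v = v.1 * partialX g q + v.2 * partialZ g q := by
  have hv : v = v.1 • ((1, 0) : R2) + v.2 • ((0, 1) : R2) := by ext <;> simp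
  conv_lhs => rw [hv, map_add, map_smul, map_smul]
  rfl

theorem contDiff_partialX {m n : WithTop ℕ∞} (hg : ContDiff ℝ n g) (hmn : m + 1 ≤ n) :
    ContDiff ℝ m (partialX g) :=
  (hg.fderiv_right hmn).clm_apply contDiff_const

theorem contDiff_partialZ {m n : WithTop ℕ∞} (hg : ContDiff ℝ n g) (hmn : m + 1 ≤ n) :
    ContDiff ℝ m (partialZ g) :=
  (hg.fderiv_right hmn).clm_apply contDiff_const

theorem partialZ_partialX_comm (hg : ContDiff ℝ 2 g) (q : R2) :
    partialZ (partialX g) q = partialX (partialZ g) q := by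
  have hg' : DifferentiableAt ℝ (fderiv ℝ g) q :=
    (hg.fderiv_right (m := 1) (by norm_num)).differentiable one_ne_zero q
  have fderiv_partial (v w : R2) :
      fderiv ℝ (fun r => fderiv ℝ g r w) q v = fderiv ℝ (fderiv ℝ g) q v w := by
    simp [fderiv_clm_apply hg' (differentiableAt_const w)]
  calc partialZ (partialX g) q = fderiv ℝ (fderiv ℝ g) q (0, 1) (1, 0) := fderiv_partial _ _
    _ = fderiv ℝ (fderiv ℝ g) q (1, 0) (0, 1) :=
      hg.contDiffAt.isSymmSndFDerivAt (by simp) _ _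
    _ = partialX (partialZ g) q := (fderiv_partial _ _).symm

theorem eq_const_of_partials_eq_zero (hg : Differentiable ℝ g) (hx : ∀ q, partialX g q = 0)
    (hz : ∀ q, partialZ g q = 0) (q r : R2) : g q = g r :=
  is_const_of_fderiv_eq_zero hg
    (fun q => ContinuousLinearMap.ext fun v => by simp [fderiv_apply_eq_partials, hx, hz]) q r

theorem partialZ_add_mul_snd {q : R2} (hg : DifferentiableAt ℝ g q) (c : ℝ) :
    partialZ (fun r => g r + c * r.2) q = partialZ g q + c := by
  have h : fderiv ℝ (fun r => g r + c * r.2) q = _ :=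
    (hg.hasFDerivAt.add (hasFDerivAt_snd.const_mul c)).fderiv
  simp [partialZ, h]

theorem partialX_fun_neg (g : R2 → ℝ) (q : R2) :
    partialX (fun r => -g r) q = -partialX g q := by
  simp [partialX]

theorem contDiff_infty_of_partials (hg : Differentiable ℝ g) (hx : ContDiff ℝ ∞ (partialX g))
    (hz : ContDiff ℝ ∞ (partialZ g)) : ContDiff ℝ ∞ g := by
  refine contDiff_infty_iff_fderiv.2 ⟨hg, contDiff_clm_apply_iff.2 fun v => ?_⟩
  simp only [fderiv_apply_eq_partials]
  fun_prop

theorem exists_partials_eq {A B : R2 → ℝ} (hA : Differentiable ℝ A) (hB : Differentiable ℝ B)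
    (hAB : ∀ q, partialZ A q = partialX B q) :
    ∃ g : R2 → ℝ, Differentiable ℝ g ∧ partialX g = A ∧ partialZ g = B := by
  let θ : R2 → R2 →L[ℝ] ℝ := fun q =>
    A q • ContinuousLinearMap.fst ℝ ℝ ℝ + B q • ContinuousLinearMap.snd ℝ ℝ ℝ
  have hθ : Differentiable ℝ θ := by fun_prop
  have fderiv_θ (q u v : R2) :
      fderiv ℝ θ q u v = fderiv ℝ A q u * v.1 + fderiv ℝ B q u * v.2 := by
    have h := ((hA q).hasFDerivAt.smul_const (ContinuousLinearMap.fst ℝ ℝ ℝ)).add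
      ((hB q).hasFDerivAt.smul_const (ContinuousLinearMap.snd ℝ ℝ ℝ))
    have e : fderiv ℝ θ q = _ := h.fderiv
    simp [e]
  have closed (q u v : R2) : fderiv ℝ θ q u v = fderiv ℝ θ q v u := by
    simp only [fderiv_θ, fderiv_apply_eq_partials, hAB]
    ring
  obtain ⟨g, hg⟩ := convex_univ.exists_forall_hasFDerivAt_of_fderiv_symmetric isOpen_univ
    hθ.differentiableOn fun q _ => closed q
  have fderiv_g (q : R2) : fderiv ℝ g q = θ q := (hg q trivial).fderiv
  exact ⟨g, fun q => (hg q trivial).differentiableAt,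
    funext fun q => by simp [partialX, fderiv_g, θ],
    funext fun q => by simp [partialZ, fderiv_g, θ]⟩

end PlaneCalculus

section VectorFields

variable {Y Z : R2 → R2} {q : R2}

theorem fderiv_apply_eq_prod_partials (hY : DifferentiableAt ℝ Y q) (v : R2) :
    fderiv ℝ Y q v =
      (v.1 * partialX (fun r => (Y r).1) q + v.2 * partialZ (fun r => (Y r).1) q,
        v.1 * partialX (fun r => (Y r).2) q + v.2 * partialZ (fun r => (Y r).2) q) := by
  have hprod : fderiv ℝ Y q = _ := hY.fst.fderiv_prodMk hY.snd
  rw [hprod, ContinuousLinearMap.prod_apply, fderiv_apply_eq_partials, fderiv_apply_eq_partials]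

theorem contDiff_areaPairing {n : WithTop ℕ∞} (hY : ContDiff ℝ n Y) (hZ : ContDiff ℝ n Z) :
    ContDiff ℝ n (areaPairing Y Z) := by
  unfold areaPairing
  fun_prop

theorem fderiv_areaPairing_apply (hY : DifferentiableAt ℝ Y q) (hZ : DifferentiableAt ℝ Z q)
    (v : R2) :
    fderiv ℝ (areaPairing Y Z) q v =
      areaPairing (fun _ => fderiv ℝ Y q v) Z q + areaPairing Y (fun _ => fderiv ℝ Z q v) q := by
  have h := (hY.hasFDerivAt.fst.mul hZ.hasFDerivAt.snd).sub
    (hY.hasFDerivAt.snd.mul hZ.hasFDerivAt.fst)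
  have e : fderiv ℝ (areaPairing Y Z) q = _ := h.fderiv
  simp only [e, areaPairing, sub_apply, add_apply, smul_apply, ContinuousLinearMap.comp_apply,
    ContinuousLinearMap.coe_fst', ContinuousLinearMap.coe_snd', smul_eq_mul]
  ring

theorem pbr_eq_conformalField_areaPairing (hY : DifferentiableAt ℝ Y q)
    (hZ : DifferentiableAt ℝ Z q) :
    pbr Y Z q = conformalField 0 (areaPairing Y Z) q + divergence Z q • Y q
      - divergence Y q • Z q := by
  ext <;>
    simp only [pbr, conformalField, divergence, areaPairing, partialX, partialZ,
      fderiv_areaPairing_apply hY hZ, fderiv_apply_eq_prod_partials hY,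
      fderiv_apply_eq_prod_partials hZ, Prod.fst_sub, Prod.fst_add, Prod.smul_fst, Prod.snd_sub,
      Prod.snd_add, Prod.smul_snd, smul_eq_mul] <;>
    ring

end VectorFields

section ConformalFields

variable {g k : R2 → ℝ}

theorem contDiff_conformalField {m n : WithTop ℕ∞} (a : ℝ) (hg : ContDiff ℝ n g)
    (hmn : m + 1 ≤ n) : ContDiff ℝ m (conformalField a g) := by
  have hx := contDiff_partialX hg hmn
  have hz := contDiff_partialZ hg hmn
  unfold conformalField
  fun_prop

theorem divergence_conformalField (a : ℝ) (hg : ContDiff ℝ 2 g) (q : R2) :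
    divergence (conformalField a g) q = a := by
  have hx : Differentiable ℝ (partialX g) :=
    (contDiff_partialX (m := 1) hg (by norm_num)).differentiable one_ne_zero
  calc divergence (conformalField a g) q
      = -partialX (partialZ g) q + (partialZ (partialX g) q + a) :=
        congrArg₂ (· + ·) (partialX_fun_neg _ q) (partialZ_add_mul_snd (hx q) a)
    _ = a := by rw [partialZ_partialX_comm hg, neg_add_cancel_left]

theorem conformalField_add_smul {q : R2} (hg : DifferentiableAt ℝ g q)
    (hk : DifferentiableAt ℝ k q) (a b c : ℝ) :
    conformalField (a + c * b) (g + c • k) q = conformalField a g q + c • conformalField b k q := by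
  ext <;>
    simp only [conformalField, partialX, partialZ, fderiv_add hg (hk.const_smul c),
      fderiv_const_smul hk, add_apply, smul_apply, Prod.fst_add, Prod.smul_fst, Prod.snd_add,
      Prod.smul_snd, smul_eq_mul] <;>
    ring

theorem contDiff_conformalBracket {m n : WithTop ℕ∞} (a b : ℝ) (hg : ContDiff ℝ n g)
    (hk : ContDiff ℝ n k) (hmn : m + 1 ≤ n) : ContDiff ℝ m (conformalBracket a b g k) := by
  have hm : m ≤ n := le_self_add.trans hmn
  exact ((contDiff_areaPairing (contDiff_conformalField a hg hmn)
    (contDiff_conformalField b hk hmn)).add ((hg.of_le hm).const_smul b)).add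
    ((hk.of_le hm).const_smul (-a))

theorem pbr_conformalField (a b : ℝ) (hg : ContDiff ℝ 2 g) (hk : ContDiff ℝ 2 k) :
    pbr (conformalField a g) (conformalField b k) =
      conformalField 0 (conformalBracket a b g k) := by
  set Y := conformalField a g with hY
  set Z := conformalField b k with hZ
  have Y_contDiff : ContDiff ℝ 1 Y := contDiff_conformalField a hg (by norm_num)
  have Z_contDiff : ContDiff ℝ 1 Z := contDiff_conformalField b hk (by norm_num)
  have hYZ := (contDiff_areaPairing Y_contDiff Z_contDiff).differentiable one_ne_zero
  have hg' := hg.differentiable two_ne_zero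
  have hk' := hk.differentiable two_ne_zero
  funext q
  calc pbr Y Z q = conformalField 0 (areaPairing Y Z) q + b • Y q + -a • Z q := by
        rw [pbr_eq_conformalField_areaPairing (Y_contDiff.differentiable one_ne_zero q)
          (Z_contDiff.differentiable one_ne_zero q), hY, hZ, divergence_conformalField a hg,
          divergence_conformalField b hk, neg_smul, sub_eq_add_neg]
    _ = conformalField (0 + b * a + -a * b) (conformalBracket a b g k) q := by
        rw [conformalBracket, conformalField_add_smul ((hYZ q).add ((hg' q).const_smul b)) (hk' q),
          conformalField_add_smul (hYZ q) (hg' q)]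
    _ = conformalField 0 (conformalBracket a b g k) q := by
        rw [show 0 + b * a + -a * b = 0 by ring]

theorem conformalField_eq_zero_iff {a : ℝ} (hg : ContDiff ℝ 2 g) :
    conformalField a g = 0 ↔ a = 0 ∧ ∃ c, g = fun _ => c := by
  constructor
  · intro h
    obtain rfl : a = 0 := by
      rw [← divergence_conformalField a hg 0, h]
      simp [divergence, partialX, partialZ]
    have hz (q : R2) : partialZ g q = 0 := by
      simpa [conformalField] using congrArg Prod.fst (congrFun h q)
    have hx (q : R2) : partialX g q = 0 := by
      simpa [conformalField] using congrArg Prod.snd (congrFun h q)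
    exact ⟨rfl, g 0, funext fun q =>
      eq_const_of_partials_eq_zero (hg.differentiable two_ne_zero) hx hz q 0⟩
  · rintro ⟨rfl, c, rfl⟩
    ext q <;> simp [conformalField, partialX, partialZ]

theorem exists_conformalField_eq {Y : R2 → R2} {a : ℝ} (hY : ContDiff ℝ ∞ Y)
    (hdiv : ∀ q, divergence Y q = a) : ∃ g, ContDiff ℝ ∞ g ∧ conformalField a g = Y := by
  have hP : ContDiff ℝ ∞ fun r => -(Y r).1 := by fun_prop
  have hQ : ContDiff ℝ ∞ fun r => (Y r).2 + -a * r.2 := by fun_prop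
  have closed (q : R2) :
      partialZ (fun r => (Y r).2 + -a * r.2) q = partialX (fun r => -(Y r).1) q := by
    rw [partialZ_add_mul_snd (hY.snd.differentiable (by simp) q), partialX_fun_neg, ← hdiv q,
      divergence]
    ring
  obtain ⟨g, hg, hx, hz⟩ :=
    exists_partials_eq (hQ.differentiable (by simp)) (hP.differentiable (by simp)) closed
  refine ⟨g, contDiff_infty_of_partials hg (hx ▸ hQ) (hz ▸ hP), funext fun q => ?_⟩
  simp [conformalField, hx, hz]

end ConformalFields

section AffineInY

variable {g k : R2 → ℝ}

theorem affineInY_eq_const_iff {a c : ℝ} :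
    (affineInY a g = fun _ => c) ↔ a = 0 ∧ g = fun _ => c := by
  constructor
  · intro h
    have hg (x z : ℝ) : g (x, z) = c := by simpa [affineInY] using congrFun h (x, 0, z)
    have ha : a + g (0, 0) = c := by simpa [affineInY] using congrFun h (0, 1, 0)
    exact ⟨by simpa [hg] using ha, funext fun q => hg q.1 q.2⟩
  · rintro ⟨rfl, rfl⟩
    funext p
    simp [affineInY]

theorem fderiv_affineInY_apply (a : ℝ) {p : R3} (hg : DifferentiableAt ℝ g (p.1, p.2.2))
    (v : R3) :
    fderiv ℝ (affineInY a g) p v = a * v.2.1 + fderiv ℝ g (p.1, p.2.2) (v.1, v.2.2) := by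
  have hsnd : HasFDerivAt Prod.snd (ContinuousLinearMap.snd ℝ ℝ R2) p := hasFDerivAt_snd
  have h := (hsnd.fst.const_mul a).add
    (hg.hasFDerivAt.comp p (hasFDerivAt_fst.prodMk hsnd.snd))
  have e : fderiv ℝ (affineInY a g) p = _ := h.fderiv
  simp [e]

theorem px_affineInY (a : ℝ) {p : R3} (hg : DifferentiableAt ℝ g (p.1, p.2.2)) :
    px (affineInY a g) p = partialX g (p.1, p.2.2) := by
  simp [px, fderiv_affineInY_apply a hg, partialX]

theorem py_affineInY (a : ℝ) {p : R3} (hg : DifferentiableAt ℝ g (p.1, p.2.2)) :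
    py (affineInY a g) p = a := by
  simp [py, fderiv_affineInY_apply a hg, Prod.mk_zero_zero]

theorem pz_affineInY (a : ℝ) {p : R3} (hg : DifferentiableAt ℝ g (p.1, p.2.2)) :
    pz (affineInY a g) p = partialZ g (p.1, p.2.2) := by
  simp [pz, fderiv_affineInY_apply a hg, partialZ]

theorem PiS_affineInY (a : ℝ) (hg : Differentiable ℝ g) :
    PiS (affineInY a g) = conformalField a g := by
  funext q
  rw [PiS, px_affineInY a (hg _), py_affineInY a (hg _), pz_affineInY a (hg _), conformalField]

theorem lagr_affineInY (a b : ℝ) (hg : Differentiable ℝ g) (hk : Differentiable ℝ k) :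
    lagr (affineInY a g) (affineInY b k) = affineInY 0 (conformalBracket a b g k) := by
  funext p
  simp only [lagr, px_affineInY _ (hg _), py_affineInY _ (hg _), pz_affineInY _ (hg _),
    px_affineInY _ (hk _), py_affineInY _ (hk _), pz_affineInY _ (hk _), affineInY,
    conformalBracket, areaPairing, conformalField, Pi.add_apply, Pi.smul_apply, smul_eq_mul]
  ring

end AffineInY

section LagrangeSubalgebra

variable {f h : R3 → ℝ}

theorem memS_iff_exists_affineInY : memS f ↔ ∃ a g, ContDiff ℝ ∞ g ∧ f = affineInY a g := by
  simp only [memS, affineInY, funext_iff]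

theorem memS_lagr (hf : memS f) (hh : memS h) : memS (lagr f h) := by
  obtain ⟨a, g, hg, rfl⟩ := memS_iff_exists_affineInY.1 hf
  obtain ⟨b, k, hk, rfl⟩ := memS_iff_exists_affineInY.1 hh
  rw [lagr_affineInY a b (hg.differentiable (by simp)) (hk.differentiable (by simp))]
  exact memS_iff_exists_affineInY.2 ⟨0, _, contDiff_conformalBracket a b hg hk (by simp), rfl⟩

theorem PiS_lagr (hf : memS f) (hh : memS h) : PiS (lagr f h) = pbr (PiS f) (PiS h) := by
  obtain ⟨a, g, hg, rfl⟩ := memS_iff_exists_affineInY.1 hf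
  obtain ⟨b, k, hk, rfl⟩ := memS_iff_exists_affineInY.1 hh
  have hg' : Differentiable ℝ g := hg.differentiable (by simp)
  have hk' : Differentiable ℝ k := hk.differentiable (by simp)
  have hgk : Differentiable ℝ (conformalBracket a b g k) :=
    (contDiff_conformalBracket (m := ∞) a b hg hk (by simp)).differentiable (by simp)
  rw [lagr_affineInY a b hg' hk', PiS_affineInY 0 hgk, PiS_affineInY a hg', PiS_affineInY b hk',
    pbr_conformalField a b (contDiff_infty.1 hg 2) (contDiff_infty.1 hk 2)]

theorem PiS_eq_zero_iff (hf : memS f) : PiS f = 0 ↔ ∃ c, f = fun _ => c := by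
  obtain ⟨a, g, hg, rfl⟩ := memS_iff_exists_affineInY.1 hf
  rw [PiS_affineInY a (hg.differentiable (by simp)),
    conformalField_eq_zero_iff (contDiff_infty.1 hg 2)]
  simp only [affineInY_eq_const_iff, exists_and_left]

theorem exists_memS_PiS_eq_iff {Y : R2 → R2} (hY : ContDiff ℝ ∞ Y) :
    (∃ f, memS f ∧ PiS f = Y) ↔ ∃ a, ∀ q, divergence Y q = a := by
  constructor
  · rintro ⟨f, hf, rfl⟩
    obtain ⟨a, g, hg, rfl⟩ := memS_iff_exists_affineInY.1 hf
    rw [PiS_affineInY a (hg.differentiable (by simp))]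
    exact ⟨a, divergence_conformalField a (contDiff_infty.1 hg 2)⟩
  · rintro ⟨a, hdiv⟩
    obtain ⟨g, hg, rfl⟩ := exists_conformalField_eq hY hdiv
    exact ⟨affineInY a g, memS_iff_exists_affineInY.2 ⟨a, g, hg, rfl⟩,
      PiS_affineInY a (hg.differentiable (by simp))⟩

end LagrangeSubalgebra

/-- The set `S = {a·y + g(x,z)}` is a Lie subalgebra of
`(C^∞(ℝ³), {·,·})`, and `Π(a·y + g) = (−g_z, g_x + a·z)` is a Lie algebra homomorphism
to vector fields on the `(x,z)`-plane whose kernel is the one-dimensional space of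
constants and whose image consists exactly of the vector fields `Y = (P,Q)` with
`∂P/∂x + ∂Q/∂z` constant, i.e. `L_Y (dx ∧ dz) = λ · dx ∧ dz` with `λ ∈ ℝ` constant. -/
theorem stmt17 :
    (∀ f g : R3 → ℝ, memS f → memS g → memS (lagr f g)) ∧
    (∀ f g : R3 → ℝ, memS f → memS g →
      ∀ q : R2, PiS (lagr f g) q = pbr (PiS f) (PiS g) q) ∧
    (∀ f : R3 → ℝ, memS f →
      ((∀ q : R2, PiS f q = 0) ↔ ∃ c : ℝ, ∀ p : R3, f p = c)) ∧
    (∀ Y : R2 → R2, ContDiff ℝ (⊤ : ℕ∞) Y →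
      ((∃ f : R3 → ℝ, memS f ∧ ∀ q : R2, PiS f q = Y q) ↔
        ∃ lam : ℝ, ∀ q : R2,
          fderiv ℝ (fun r => (Y r).1) q (1, 0)
            + fderiv ℝ (fun r => (Y r).2) q (0, 1) = lam)) := by
  refine ⟨fun f h => memS_lagr, fun f h hf hh q => congrFun (PiS_lagr hf hh) q, fun f hf => ?_,
    fun Y hY => ?_⟩
  · simpa only [funext_iff, Pi.zero_apply] using PiS_eq_zero_iff hf
  · simpa only [funext_iff, divergence, partialX, partialZ] using exists_memS_PiS_eq_iff hY
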